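/- Let $f: \mathbb{R}^3 \to \mathbb{C}$ be as above ($C_0^n$ on $\mathbb{R}^3\setminus\{0\}$ with compact support away from $0$) and set $I(x,t) := \int_{\mathbb{R}^3} e^{i\alpha k \cdot x - it|k|} f(k)\,d^3k$ for $\alpha \ge 0$. Then there exists $c_n$ such that for all $x \in \mathbb{R}^3$ and $t \in \mathbb{R}$, $|I(x,t)| \le c_n \frac{1 + (\alpha|x|)^n}{1 + |t|^n}$. -/

import Mathlib

open MeasureTheory
open scoped RealInnerProductSpace

/-!
The phase `φ k = ⟪k, α x⟫ - t ‖k‖` is homogeneous of degree one, so the Euler field `k ↦ k` acts on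
it by `(k · ∇) φ = φ`. Hence integrating the Euler derivative of `e^{iφ} φ^{-(m+1)} g` by parts
trades `e^{iφ} φ^{-m} g` for `e^{iφ} φ^{-(m+1)} G`, where `G` is the Euler derivative of `g` plus a
multiple of `g` and does not involve `φ`. If `2 ‖α x‖ < |t|`, then `|φ k| ≥ |t| ‖k‖ / 2`, and `n`
such steps give a bound of order `|t|^{-n}`, uniformly in the phase. If `|t| ≤ 2 ‖α x‖`, the bound
by the `L¹` norm of `f` suffices.
-/

theorem exists_pos_forall_le_norm_of_zero_notMem_tsupport {E F : Type*} [SeminormedAddGroup E]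
    [Zero F] {g : E → F} (h0 : 0 ∉ tsupport g) : ∃ δ > 0, ∀ k, g k ≠ 0 → δ ≤ ‖k‖ := by
  obtain ⟨δ, hδ, hball⟩ :=
    Metric.mem_nhds_iff.1 ((isClosed_tsupport g).isOpen_compl.mem_nhds h0)
  refine ⟨δ, hδ, fun k hk ↦ ?_⟩
  by_contra! hlt
  exact hball (mem_ball_zero_iff.2 hlt) (subset_tsupport g hk)

section EulerField

variable {E F : Type*} [NormedAddCommGroup E] [NormedSpace ℝ E]
  [NormedAddCommGroup F] [NormedSpace ℝ F]

theorem contDiff_of_contDiffAt_tsupport {n : WithTop ℕ∞} {f : E → F}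
    (hf : ∀ x ∈ tsupport f, ContDiffAt ℝ n f x) : ContDiff ℝ n f :=
  contMDiff_iff_contDiff.1 (contMDiff_of_tsupport fun x hx ↦ (hf x hx).contMDiffAt)

variable [FiniteDimensional ℝ E] [MeasurableSpace E] [BorelSpace E]
  {μ : Measure E} [μ.IsAddHaarMeasure]

theorem integral_clm_smul_fderiv_apply {h : E → F} (hh : ContDiff ℝ 1 h)
    (hs : HasCompactSupport h) (L : E →L[ℝ] ℝ) (v : E) :
    ∫ k, L k • fderiv ℝ h k v ∂μ = -(L v • ∫ k, h k ∂μ) := by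
  have hDh : Continuous fun k ↦ fderiv ℝ h k v :=
    (hh.continuous_fderiv one_ne_zero).clm_apply continuous_const
  have hintegrable : Integrable h μ := hh.continuous.integrable_of_hasCompactSupport hs
  rw [integral_smul_fderiv_eq_neg_fderiv_smul_of_integrable]
  · simp only [ContinuousLinearMap.fderiv, integral_smul]
  · simpa only [ContinuousLinearMap.fderiv] using! hintegrable.smul (L v)
  · exact (L.continuous.smul hDh).integrable_of_hasCompactSupport (hs.fderiv_apply ℝ v).smul_left
  · exact (L.continuous.smul hh.continuous).integrable_of_hasCompactSupport hs.smul_left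
  · exact fun k _ ↦ L.differentiableAt
  · exact fun k _ ↦ hh.differentiable one_ne_zero k

theorem integral_fderiv_apply_self {h : E → F} (hh : ContDiff ℝ 1 h) (hs : HasCompactSupport h) :
    ∫ k, fderiv ℝ h k k ∂μ = -((Module.finrank ℝ E : ℝ) • ∫ k, h k ∂μ) := by
  let b := Module.finBasis ℝ E
  let coord (i) : E →L[ℝ] ℝ := (b.coord i).toContinuousLinearMap
  have hcoord_basis (i) : coord i (b i) = 1 := by simp [coord]
  have hsum (k : E) : fderiv ℝ h k k = ∑ i, coord i k • fderiv ℝ h k (b i) := by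
    conv_lhs => rw [← b.sum_repr k, map_sum, b.sum_repr k]
    simp [coord]
  have hintegrable (i) : Integrable (fun k ↦ coord i k • fderiv ℝ h k (b i)) μ :=
    ((coord i).continuous.smul ((hh.continuous_fderiv one_ne_zero).clm_apply
      continuous_const)).integrable_of_hasCompactSupport (hs.fderiv_apply ℝ (b i)).smul_left
  simp_rw [hsum]
  rw [integral_finsetSum _ fun i _ ↦ hintegrable i]
  simp [integral_clm_smul_fderiv_apply hh hs, hcoord_basis, Nat.cast_smul_eq_nsmul]

end EulerField

section EulerStep

variable {E F : Type*} [NormedAddCommGroup E] [NormedSpace ℝ E]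
  [NormedAddCommGroup F] [NormedSpace ℝ F]

/-- The amplitude produced from `g` by one integration by parts along the Euler field, applied to
an integrand carrying the factor `φ⁻ᵐ`. The coefficient combines the divergence `dim E` of the Euler
field with the degree `-(m + 1)` of `φ⁻ᵐ⁻¹`. -/
noncomputable def eulerStep (m : ℕ) (g : E → F) (k : E) : F :=
  fderiv ℝ g k k + ((Module.finrank ℝ E : ℝ) - (m + 1)) • g k

theorem contDiff_eulerStep {n : ℕ} (m : ℕ) {g : E → F} (hg : ContDiff ℝ (n + 1 : ℕ) g) :
    ContDiff ℝ n (eulerStep m g) :=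
  ((hg.fderiv_right (m := n) (by simp)).clm_apply contDiff_id).add
    ((hg.of_le (by simp)).const_smul _)

theorem tsupport_eulerStep_subset (m : ℕ) (g : E → F) :
    tsupport (eulerStep m g) ⊆ tsupport g := by
  refine closure_minimal (fun k hk ↦ ?_) (isClosed_tsupport g)
  by_contra hkg
  simp [eulerStep, fderiv_of_notMem_tsupport ℝ hkg, image_eq_zero_of_notMem_tsupport hkg] at hk

end EulerStep

/-- The oscillating weight `e^{iφ} φ⁻ᵐ`, whose index `m` counts the integrations by parts already
performed. Where `φ` vanishes it is `0` for `m > 0`, by the convention for division by zero. -/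
noncomputable def oscWeight {E : Type*} (φ : E → ℝ) (m : ℕ) (k : E) : ℂ :=
  Complex.exp (φ k * Complex.I) / (φ k : ℂ) ^ m

theorem norm_oscWeight {E : Type*} (φ : E → ℝ) (m : ℕ) (k : E) :
    ‖oscWeight φ m k‖ = (|φ k| ^ m)⁻¹ := by
  simp [oscWeight, Complex.norm_exp_ofReal_mul_I]

theorem hasDerivAt_exp_mul_I_div_pow (m : ℕ) {z : ℂ} (hz : z ≠ 0) :
    HasDerivAt (fun w : ℂ ↦ Complex.exp (w * Complex.I) / w ^ (m + 1))
      ((Complex.I * (Complex.exp (z * Complex.I) / z ^ m)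
        - (m + 1) * (Complex.exp (z * Complex.I) / z ^ (m + 1))) / z) z := by
  refine (((hasDerivAt_mul_const Complex.I).cexp.div (hasDerivAt_pow (m + 1) z)
    (pow_ne_zero _ hz))).congr_deriv ?_
  rw [Nat.add_sub_cancel]
  push_cast
  field_simp
  ring

/-- A phase function on `E ∖ {0}` that is homogeneous of degree one and bounded below in absolute
value by `lam ‖k‖`. Homogeneity is encoded infinitesimally by Euler's identity `(k · ∇) φ = φ`; the
value at the origin is unconstrained. -/
structure IsConicPhase {E : Type*} [NormedAddCommGroup E] [NormedSpace ℝ E]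
    (lam : ℝ) (φ : E → ℝ) : Prop where
  pos : 0 < lam
  contDiffAt : ∀ k ≠ 0, ContDiffAt ℝ 1 φ k
  fderiv_self : ∀ k ≠ 0, fderiv ℝ φ k k = φ k
  le_abs : ∀ k ≠ 0, lam * ‖k‖ ≤ |φ k|

namespace IsConicPhase

section Weight

variable {E : Type*} [NormedAddCommGroup E] [NormedSpace ℝ E] {lam : ℝ} {φ : E → ℝ} {k : E}

theorem ne_zero (hφ : IsConicPhase lam φ) (hk : k ≠ 0) : φ k ≠ 0 :=
  abs_pos.1 ((mul_pos hφ.pos (norm_pos_iff.2 hk)).trans_le (hφ.le_abs k hk))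

theorem contDiffAt_oscWeight (hφ : IsConicPhase lam φ) (m : ℕ) (hk : k ≠ 0) :
    ContDiffAt ℝ 1 (oscWeight φ m) k := by
  have hφk : ContDiffAt ℝ 1 (fun k ↦ (φ k : ℂ)) k :=
    Complex.ofRealCLM.contDiff.contDiffAt.comp k (hφ.contDiffAt k hk)
  exact (hφk.mul contDiffAt_const).cexp.mul ((hφk.pow m).inv
    (pow_ne_zero m (Complex.ofReal_ne_zero.2 (hφ.ne_zero hk))))

theorem fderiv_oscWeight_self (hφ : IsConicPhase lam φ) (m : ℕ) (hk : k ≠ 0) :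
    fderiv ℝ (oscWeight φ (m + 1)) k k =
      Complex.I * oscWeight φ m k - (m + 1) * oscWeight φ (m + 1) k := by
  have hφk : HasFDerivAt (fun k ↦ (φ k : ℂ)) (Complex.ofRealCLM ∘L fderiv ℝ φ k) k :=
    Complex.ofRealCLM.hasFDerivAt.comp k
      ((hφ.contDiffAt k hk).differentiableAt one_ne_zero).hasFDerivAt
  have hne : (φ k : ℂ) ≠ 0 := Complex.ofReal_ne_zero.2 (hφ.ne_zero hk)
  rw [show oscWeight φ (m + 1) =
      (fun w : ℂ ↦ Complex.exp (w * Complex.I) / w ^ (m + 1)) ∘ fun k ↦ (φ k : ℂ) from rfl,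
    ((hasDerivAt_exp_mul_I_div_pow m hne).comp_hasFDerivAt k hφk).fderiv]
  simp [hφ.fderiv_self k hk, oscWeight, div_mul_cancel₀ _ hne]

end Weight

variable {E F : Type*} [NormedAddCommGroup E] [NormedSpace ℝ E]
  [NormedAddCommGroup F] [NormedSpace ℂ F] {lam : ℝ} {φ : E → ℝ} {g : E → F}

theorem contDiff_oscWeight_smul (hφ : IsConicPhase lam φ) (m : ℕ) (hg : ContDiff ℝ 1 g)
    (h0 : 0 ∉ tsupport g) : ContDiff ℝ 1 fun k ↦ oscWeight φ m k • g k := by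
  refine contDiff_of_contDiffAt_tsupport fun k hk ↦ ?_
  have hk0 : k ≠ 0 := ne_of_mem_of_not_mem (tsupport_smul_subset_right _ _ hk) h0
  exact (hφ.contDiffAt_oscWeight m hk0).smul hg.contDiffAt

theorem continuous_oscWeight_smul (hφ : IsConicPhase lam φ) (m : ℕ) (hg : Continuous g)
    (h0 : 0 ∉ tsupport g) : Continuous fun k ↦ oscWeight φ m k • g k := by
  refine continuous_of_tsupport fun k hk ↦ ?_
  have hk0 : k ≠ 0 := ne_of_mem_of_not_mem (tsupport_smul_subset_right _ _ hk) h0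
  exact (hφ.contDiffAt_oscWeight m hk0).continuousAt.smul hg.continuousAt

theorem fderiv_oscWeight_smul_self (hφ : IsConicPhase lam φ) (m : ℕ) (hg : ContDiff ℝ 1 g)
    (h0 : 0 ∉ tsupport g) (k : E) :
    fderiv ℝ (fun k ↦ oscWeight φ (m + 1) k • g k) k k =
      Complex.I • oscWeight φ m k • g k + oscWeight φ (m + 1) k • eulerStep m g k
        - (Module.finrank ℝ E : ℝ) • oscWeight φ (m + 1) k • g k := by
  by_cases hk : k ∈ tsupport g
  · have hk0 : k ≠ 0 := ne_of_mem_of_not_mem hk h0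
    rw [fderiv_fun_smul ((hφ.contDiffAt_oscWeight (m + 1) hk0).differentiableAt one_ne_zero)
      (hg.differentiable one_ne_zero k)]
    simp only [add_apply, smul_apply,
      ContinuousLinearMap.smulRight_apply, hφ.fderiv_oscWeight_self m hk0, eulerStep,
      ← Complex.coe_smul]
    push_cast
    module
  · have hwk : k ∉ tsupport fun k ↦ oscWeight φ (m + 1) k • g k :=
      fun h ↦ hk (tsupport_smul_subset_right _ _ h)
    simp [eulerStep, fderiv_of_notMem_tsupport ℝ hwk, fderiv_of_notMem_tsupport ℝ hk,
      image_eq_zero_of_notMem_tsupport hk]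

variable [MeasurableSpace E] {μ : Measure E}

theorem norm_integral_oscWeight_smul_le (hφ : IsConicPhase lam φ) (m : ℕ) (hg : Integrable g μ)
    {δ : ℝ} (hδ : 0 < δ) (hgδ : ∀ k, g k ≠ 0 → δ ≤ ‖k‖) :
    ‖∫ k, oscWeight φ m k • g k ∂μ‖ ≤ (∫ k, ‖g k‖ ∂μ) / δ ^ m / lam ^ m := by
  have hlam := hφ.pos
  have hpointwise (k : E) : ‖oscWeight φ m k • g k‖ ≤ ((lam * δ) ^ m)⁻¹ * ‖g k‖ := by
    rcases eq_or_ne (g k) 0 with hgk | hgk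
    · simp [hgk]
    · have hk := hgδ k hgk
      have hφk : lam * δ ≤ |φ k| :=
        (mul_le_mul_of_nonneg_left hk hlam.le).trans
          (hφ.le_abs k (norm_pos_iff.1 (hδ.trans_le hk)))
      rw [norm_smul, norm_oscWeight]
      gcongr
  calc ‖∫ k, oscWeight φ m k • g k ∂μ‖
      ≤ ∫ k, ((lam * δ) ^ m)⁻¹ * ‖g k‖ ∂μ :=
        norm_integral_le_of_norm_le (hg.norm.const_mul _) (.of_forall hpointwise)
    _ = (∫ k, ‖g k‖ ∂μ) / δ ^ m / lam ^ m := by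
        rw [integral_const_mul, mul_pow]
        field_simp

variable [FiniteDimensional ℝ E] [BorelSpace E] [μ.IsAddHaarMeasure]

theorem integral_oscWeight_smul_eq (hφ : IsConicPhase lam φ) (m : ℕ) (hg : ContDiff ℝ 1 g)
    (hs : HasCompactSupport g) (h0 : 0 ∉ tsupport g) :
    ∫ k, oscWeight φ m k • g k ∂μ =
      Complex.I • ∫ k, oscWeight φ (m + 1) k • eulerStep m g k ∂μ := by
  have hintegrable (j : ℕ) {u : E → F} (hu : Continuous u) (hug : tsupport u ⊆ tsupport g) :
      Integrable (fun k ↦ oscWeight φ j k • u k) μ :=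
    (hφ.continuous_oscWeight_smul j hu fun h ↦ h0 (hug h)).integrable_of_hasCompactSupport
      (hs.mono' ((subset_tsupport u).trans hug)).smul_left
  have hI : Integrable (fun k ↦ Complex.I • oscWeight φ m k • g k) μ :=
    (hintegrable m hg.continuous subset_rfl).smul Complex.I
  have hstep := hintegrable (m + 1) (contDiff_eulerStep (n := 0) m hg).continuous
    (tsupport_eulerStep_subset m g)
  have hdim : Integrable
      (fun k ↦ (Module.finrank ℝ E : ℝ) • oscWeight φ (m + 1) k • g k) μ :=
    (hintegrable (m + 1) hg.continuous subset_rfl).smul _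
  have hparts := integral_fderiv_apply_self (μ := μ)
    (hφ.contDiff_oscWeight_smul (m + 1) hg h0) hs.smul_left
  simp_rw [hφ.fderiv_oscWeight_smul_self m hg h0] at hparts
  rw [integral_sub (hI.fun_add hstep) hdim, integral_add hI hstep, integral_smul, integral_smul,
    sub_eq_neg_self] at hparts
  calc ∫ k, oscWeight φ m k • g k ∂μ
      = -(Complex.I • Complex.I • ∫ k, oscWeight φ m k • g k ∂μ) := by simp [smul_smul]
    _ = Complex.I • ∫ k, oscWeight φ (m + 1) k • eulerStep m g k ∂μ := by
        rw [eq_neg_of_add_eq_zero_left hparts, smul_neg, neg_neg]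

end IsConicPhase

section Decay

variable {E F : Type*} [NormedAddCommGroup E] [NormedSpace ℝ E] [FiniteDimensional ℝ E]
  [MeasurableSpace E] [BorelSpace E] {μ : Measure E} [μ.IsAddHaarMeasure]
  [NormedAddCommGroup F] [NormedSpace ℂ F] {f : E → F}

theorem exists_integral_oscWeight_zero_smul_eq {N n : ℕ} (hf : ContDiff ℝ (N + n : ℕ) f)
    (hs : HasCompactSupport f) (h0 : 0 ∉ tsupport f) :
    ∃ G : E → F, ContDiff ℝ N G ∧ tsupport G ⊆ tsupport f ∧
      ∀ {lam : ℝ} {φ : E → ℝ}, IsConicPhase lam φ →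
        ∫ k, oscWeight φ 0 k • f k ∂μ = Complex.I ^ n • ∫ k, oscWeight φ n k • G k ∂μ := by
  induction n generalizing N with
  | zero => exact ⟨f, hf, subset_rfl, fun _ ↦ by simp⟩
  | succ n ih =>
    obtain ⟨G, hG, hGf, hparts⟩ := ih (N := N + 1) (by rwa [add_right_comm])
    refine ⟨eulerStep n G, contDiff_eulerStep n hG, (tsupport_eulerStep_subset n G).trans hGf,
      fun hφ ↦ ?_⟩
    rw [hparts hφ, hφ.integral_oscWeight_smul_eq n (hG.of_le (by simp))
      (hs.mono' ((subset_tsupport G).trans hGf)) fun h ↦ h0 (hGf h), smul_smul, ← pow_succ]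

theorem exists_norm_integral_exp_smul_le_div_pow {n : ℕ} (hf : ContDiff ℝ n f)
    (hs : HasCompactSupport f) (h0 : 0 ∉ tsupport f) :
    ∃ C, 0 ≤ C ∧ ∀ {lam : ℝ} {φ : E → ℝ}, IsConicPhase lam φ →
      ‖∫ k, Complex.exp (φ k * Complex.I) • f k ∂μ‖ ≤ C / lam ^ n := by
  obtain ⟨G, hG, hGf, hparts⟩ :=
    exists_integral_oscWeight_zero_smul_eq (μ := μ) (N := 0) (by rwa [zero_add]) hs h0
  obtain ⟨δ, hδ, hGδ⟩ := exists_pos_forall_le_norm_of_zero_notMem_tsupport fun h ↦ h0 (hGf h)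
  have hGint : Integrable G μ :=
    hG.continuous.integrable_of_hasCompactSupport (hs.mono' ((subset_tsupport G).trans hGf))
  refine ⟨(∫ k, ‖G k‖ ∂μ) / δ ^ n, by positivity, fun {lam φ} hφ ↦ ?_⟩
  calc ‖∫ k, Complex.exp (φ k * Complex.I) • f k ∂μ‖
      = ‖∫ k, oscWeight φ 0 k • f k ∂μ‖ := by simp only [oscWeight, pow_zero, div_one]
    _ = ‖∫ k, oscWeight φ n k • G k ∂μ‖ := by
        rw [hparts hφ, norm_smul, norm_pow, Complex.norm_I, one_pow, one_mul]
    _ ≤ (∫ k, ‖G k‖ ∂μ) / δ ^ n / lam ^ n := hφ.norm_integral_oscWeight_smul_le n hGint hδ hGδ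

end Decay

theorem norm_integral_exp_mul_I_smul_le {X F : Type*} [MeasurableSpace X] {μ : Measure X}
    [NormedAddCommGroup F] [NormedSpace ℂ F] (φ : X → ℝ) (f : X → F) :
    ‖∫ k, Complex.exp (φ k * Complex.I) • f k ∂μ‖ ≤ ∫ k, ‖f k‖ ∂μ := by
  simpa only [norm_smul, Complex.norm_exp_ofReal_mul_I, one_mul] using
    norm_integral_le_integral_norm (μ := μ) fun k ↦ Complex.exp (φ k * Complex.I) • f k

section InnerProduct

variable {E : Type*} [NormedAddCommGroup E] [InnerProductSpace ℝ E]

theorem isConicPhase_inner_sub_mul_norm {y : E} {t : ℝ} (h : 2 * ‖y‖ < |t|) :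
    IsConicPhase (|t| / 2) fun k ↦ ⟪k, y⟫ - t * ‖k‖ where
  pos := by linarith [norm_nonneg y]
  contDiffAt k hk :=
    (contDiffAt_id.inner ℝ contDiffAt_const).sub (contDiffAt_const.mul (contDiffAt_norm ℝ hk))
  fderiv_self k hk := by
    have hnorm : DifferentiableAt ℝ (‖·‖) k := (contDiffAt_norm ℝ hk).differentiableAt one_ne_zero
    have hinner : HasFDerivAt (fun k ↦ ⟪k, y⟫) (innerSL ℝ y) k := by
      simpa only [innerSL_apply_apply, real_inner_comm] using! (innerSL ℝ y).hasFDerivAt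
    rw [(hinner.fun_sub (hnorm.hasFDerivAt.const_mul t)).fderiv]
    simp [hnorm.fderiv_norm_self, real_inner_comm]
  le_abs k _ := by
    calc |t| / 2 * ‖k‖ ≤ |t| * ‖k‖ - ‖k‖ * ‖y‖ := by nlinarith [norm_nonneg k]
      _ ≤ |t * ‖k‖| - |⟪k, y⟫| := by
        rw [abs_mul, abs_norm]
        gcongr
        exact abs_real_inner_le_norm k y
      _ ≤ |⟪k, y⟫ - t * ‖k‖| := by
        rw [abs_sub_comm]
        exact abs_sub_abs_le_abs_sub _ _

end InnerProduct

theorem le_mul_one_add_pow_div_one_add_pow {J A B r s : ℝ} (n : ℕ) (hA : 0 ≤ A) (hB : 0 ≤ B)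
    (hr : 0 ≤ r) (hs : 0 ≤ s) (hJA : J ≤ A) (hJB : 2 * r < s → J ≤ B / s ^ n) :
    J ≤ (A + 2 ^ n * A + B) * ((1 + r ^ n) / (1 + s ^ n)) := by
  have hJs : J * s ^ n ≤ 2 ^ n * A * r ^ n + B := by
    rcases lt_or_ge (2 * r) s with hrs | hsr
    · have hs_pos : 0 < s := by linarith
      calc J * s ^ n ≤ B := (le_div_iff₀ (pow_pos hs_pos n)).1 (hJB hrs)
        _ ≤ 2 ^ n * A * r ^ n + B := le_add_of_nonneg_left (by positivity)
    · calc J * s ^ n ≤ A * (2 * r) ^ n := by gcongr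
        _ = 2 ^ n * A * r ^ n := by ring
        _ ≤ 2 ^ n * A * r ^ n + B := le_add_of_nonneg_right hB
  rw [← mul_div_assoc, le_div_iff₀ (by positivity)]
  calc J * (1 + s ^ n) = J + J * s ^ n := by ring
    _ ≤ A + (2 ^ n * A * r ^ n + B) := add_le_add hJA hJs
    _ ≤ A + (2 ^ n * A * r ^ n + B) + (2 ^ n * A + (A + B) * r ^ n) :=
      le_add_of_nonneg_right (by positivity)
    _ = (A + 2 ^ n * A + B) * (1 + r ^ n) := by ring

theorem stationary_phase_dipole_estimate_general {E F : Type*} [NormedAddCommGroup E]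
    [InnerProductSpace ℝ E] [FiniteDimensional ℝ E] [MeasurableSpace E] [BorelSpace E]
    [NormedAddCommGroup F] [NormedSpace ℂ F] [CompleteSpace F]
    (μ : Measure E) [μ.IsAddHaarMeasure] (n : ℕ) (f : E → F) (hsupp : HasCompactSupport f)
    (h0 : (0 : E) ∉ tsupport f) (hdiff : ContDiffOn ℝ n f {(0 : E)}ᶜ) :
    ∃ c : ℝ, ∀ (α : ℝ) (x : E) (t : ℝ),
      ‖∫ k, Complex.exp (Complex.I * ((α * ⟪k, x⟫ : ℝ) : ℂ) - Complex.I * (t : ℂ) * (‖k‖ : ℂ))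
          • f k ∂μ‖
        ≤ c * ((1 + (|α| * ‖x‖) ^ n) / (1 + |t| ^ n)) := by
  have hf : ContDiff ℝ n f := contDiff_of_contDiffAt_tsupport fun k hk ↦
    hdiff.contDiffAt (isOpen_compl_singleton.mem_nhds (ne_of_mem_of_not_mem hk h0))
  obtain ⟨C, hC, hdecay⟩ := exists_norm_integral_exp_smul_le_div_pow (μ := μ) hf hsupp h0
  refine ⟨(∫ k, ‖f k‖ ∂μ) + 2 ^ n * (∫ k, ‖f k‖ ∂μ) + C * 2 ^ n, fun α x t ↦ ?_⟩
  have hphase (k : E) :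
      Complex.I * ((α * ⟪k, x⟫ : ℝ) : ℂ) - Complex.I * (t : ℂ) * (‖k‖ : ℂ) =
        ((⟪k, α • x⟫ - t * ‖k‖ : ℝ) : ℂ) * Complex.I := by
    rw [real_inner_smul_right]
    push_cast
    ring
  simp_rw [hphase]
  refine le_mul_one_add_pow_div_one_add_pow n (by positivity) (by positivity) (by positivity)
    (abs_nonneg t) (norm_integral_exp_mul_I_smul_le _ f) fun hαx ↦ ?_
  rw [← Real.norm_eq_abs α, ← norm_smul] at hαx
  simpa only [div_pow, div_div_eq_mul_div] using hdecay (isConicPhase_inner_sub_mul_norm hαx)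

/-- the stationary-phase estimate (3.2). For `f : ℝ³ → ℂ` of class `C₀ⁿ`
away from the origin with compact support avoiding `0`, and `α ≥ 0`, the integral
`I(x,t) = ∫ e^{i α k·x - i t |k|} f(k) dk` satisfies
`|I(x,t)| ≤ c_n (1 + (α|x|)ⁿ)/(1 + |t|ⁿ)` for all `x` and `t`. -/
theorem stationary_phase_dipole_estimate
    (n : ℕ) (f : EuclideanSpace ℝ (Fin 3) → ℂ)
    (hf : Continuous f) (hsupp : HasCompactSupport f)
    (h0 : (0 : EuclideanSpace ℝ (Fin 3)) ∉ tsupport f)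
    (hdiff : ContDiffOn ℝ n f {(0 : EuclideanSpace ℝ (Fin 3))}ᶜ)
    (α : ℝ) (hα : 0 ≤ α) :
    ∃ c : ℝ, ∀ (x : EuclideanSpace ℝ (Fin 3)) (t : ℝ),
      ‖∫ k : EuclideanSpace ℝ (Fin 3),
          Complex.exp (Complex.I * ((α * ⟪k, x⟫ : ℝ) : ℂ) - Complex.I * (t : ℂ) * (‖k‖ : ℂ))
            * f k‖
        ≤ c * ((1 + (α * ‖x‖) ^ n) / (1 + |t| ^ n)) := by
  obtain ⟨c, hc⟩ := stationary_phase_dipole_estimate_general volume n f hsupp h0 hdiff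
  exact ⟨c, fun x t ↦ by simpa only [abs_of_nonneg hα, smul_eq_mul] using hc α x t⟩
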